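/- Let K ⊆ ℂ be a compact connected set with more than one point, and suppose two distinct external rays of K land at the same point z₀ ∈ ∂K. Then K \ {z₀} is not connected. -/

import Mathlib

open Set Topology Filter Complex

/-!
Let `Γ_a`, `Γ_b` be the two rays together with their common landing point `z₀`, and
fix `p ∈ K \ {z₀}`. Each is an arc from `z₀` to `∞`, so `(z - z₀) / (p - z₀)` has a continuous logarithm off it (`exists_log_off_arcSet`):
move the base point `z₀` along the arc to `∞` and lift this homotopy to the constant `1` through the
covering `exp`. The difference `d` of the two logarithms takes values in `2πiℤ` off `Γ_a ∪ Γ_b`,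
hence is constant on each of the two image sectors between the rays, and also on `K \ {z₀}` if that
set is preconnected.

* The two sector values of `d` differ: otherwise the two logarithms glue across the open ray at
  angle `a` to a continuous logarithm on `ℂ \ {z₀}`, which does not exist (`no_log_punctured`).
  This replaces the Jordan curve theorem.
* The value of `d` on `K \ {z₀}` equals its value on each sector (`false_of_separated`): otherwise
  the image of that sector accumulates on `K` only at `z₀`, so `φ` tends to `z₀` along an open arc of
  the unit circle, which is impossible for a map omitting `z₀` (`false_of_tendsto_arc`, a maximum
  principle argument in the logarithmic coordinate `z = exp w`).

These two facts contradict each other.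
-/

/-! ### Logarithms off an arc to infinity -/

/-- The zero locus over `s ∈ [0, 1]` of `1 + (z - p) * κ s`. With `κ s = (p - γ s)⁻¹` this factor is
`(z - γ s) / (p - γ s)`, so the set is the trace of the arc `γ`; the parameter values with `κ s = 0`
are those where `γ s = ∞`. -/
def arcSet (κ : ℝ → ℂ) (p : ℂ) : Set ℂ :=
  {z | ∃ s ∈ Icc (0 : ℝ) 1, 1 + (z - p) * κ s = 0}

lemma isClosed_arcSet {κ : ℝ → ℂ} (hκ : ContinuousOn κ (Icc 0 1)) (p : ℂ) :
    IsClosed (arcSet κ p) := by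
  have hc : Continuous fun s : unitInterval => κ s := continuousOn_iff_continuous_domRestrict.1 hκ
  have h : IsClosed {q : unitInterval × ℂ | 1 + (q.2 - p) * κ q.1 = 0} :=
    isClosed_eq (continuous_const.add ((continuous_snd.sub continuous_const).mul
      (hc.comp continuous_fst))) continuous_const
  convert! isClosedMap_snd_of_compactSpace _ h using 1
  ext z
  simp [arcSet]

/-- The functions `1 + (z - p) * κ s` form a homotopy, nonvanishing off the arc, from the constant `1`
at `s = 0`; the logarithm at `s = 1` comes from lifting it through the covering `exp`. -/
lemma exists_log_off_arcSet {κ : ℝ → ℂ} (hκ : ContinuousOn κ (Icc 0 1)) (h0 : κ 0 = 0) (p : ℂ) :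
    ∃ L : ℂ → ℂ, ContinuousOn L (arcSet κ p)ᶜ ∧
      ∀ z ∈ (arcSet κ p)ᶜ, exp (L z) = 1 + (z - p) * κ 1 := by
  classical
  have hc : Continuous fun s : unitInterval => κ s := continuousOn_iff_continuous_domRestrict.1 hκ
  let H : C(unitInterval × ↥(arcSet κ p)ᶜ, {z : ℂ // z ≠ 0}) :=
    ⟨fun q => ⟨1 + ((q.2 : ℂ) - p) * κ q.1, fun h => q.2.2 ⟨q.1, q.1.2, h⟩⟩,
      (continuous_const.add (((continuous_subtype_val.comp continuous_snd).sub
        continuous_const).mul (hc.comp continuous_fst))).subtype_mk _⟩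
  obtain ⟨F, hF⟩ : ∃ F : C(unitInterval × ↥(arcSet κ p)ᶜ, ℂ), ∀ q, exp (F q) = H q :=
    ⟨isCoveringMap_exp.liftHomotopy H (ContinuousMap.const _ 0)
      (fun z => Subtype.ext (by simp [H, h0])), fun q => congrArg Subtype.val
      (congrFun (isCoveringMap_exp.liftHomotopy_lifts H _ _) q)⟩
  refine ⟨fun z => if hz : z ∈ (arcSet κ p)ᶜ then F (1, ⟨z, hz⟩) else 0, ?_, fun z hz => ?_⟩
  · rw [continuousOn_iff_continuous_domRestrict]
    have : Continuous fun z : ↥(arcSet κ p)ᶜ => F (1, z) := by fun_prop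
    refine this.congr fun z => ?_
    change _ = dite _ _ _
    rw [dif_pos z.2]
  · simp only [dif_pos hz, hF]
    simp [H]

lemma eq_of_exp_eq_one {X : Type*} [TopologicalSpace X] {S : Set X} (hS : IsPreconnected S)
    {f : X → ℂ} (hf : ContinuousOn f S) (h1 : ∀ x ∈ S, exp (f x) = 1)
    {x y : X} (hx : x ∈ S) (hy : y ∈ S) : f x = f y := by
  have hcount : {z : ℂ | exp z = 1}.Countable := by
    refine (countable_range fun n : ℤ => (n : ℂ) * (2 * Real.pi * I)).mono fun z hz => ?_
    obtain ⟨n, hn⟩ := exp_eq_one_iff.1 hz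
    exact ⟨n, hn.symm⟩
  exact hcount.isTotallyDisconnected (f '' S) (by rintro _ ⟨x, hx, rfl⟩; exact h1 x hx)
    (hS.image f hf) (mem_image_of_mem f hx) (mem_image_of_mem f hy)

/-- Along the unit circle around `z₀` a logarithm of `(z - z₀) * m` would increase by `2πi`. -/
lemma no_log_punctured {z₀ m : ℂ} (hm : m ≠ 0) {L : ℂ → ℂ} (hL : ContinuousOn L {z₀}ᶜ)
    (h : ∀ z, z ≠ z₀ → exp (L z) = (z - z₀) * m) : False := by
  have hne : ∀ t : ℝ, z₀ + exp (t * I) ≠ z₀ := fun t => by simp [exp_ne_zero]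
  have hc : Continuous fun t : ℝ => L (z₀ + exp (t * I)) - t * I - L (z₀ + 1) := by
    have : Continuous fun t : ℝ => L (z₀ + exp (t * I)) :=
      hL.comp_continuous (by fun_prop) hne
    exact (this.sub (by fun_prop)).sub continuous_const
  have := eq_of_exp_eq_one isPreconnected_univ hc.continuousOn (x := 0) (y := 2 * Real.pi)
    (fun t _ => ?_) (mem_univ _) (mem_univ _)
  · simp [exp_two_pi_mul_I] at this
    
  · rw [exp_sub, exp_sub, h _ (hne t), h (z₀ + 1) (by simp)]
    have := exp_ne_zero (t * I)
    field_simp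
    simp

/-! ### A uniqueness principle on an arc of the circle -/

lemma norm_exp_gt {w : ℂ} : 1 < ‖exp w‖ ↔ 0 < w.re := by
  rw [norm_exp, Real.one_lt_exp_iff]

/-- Maximum principle on a square with centre `q`: the product of the four quarter-turn rotations of
`u` about `q` vanishes on all four sides as soon as `u` vanishes on the left side. -/
lemma square_eq_zero {u : ℂ → ℂ} {q : ℂ} {δ : ℝ} (hδ : 0 < δ)
    (hc : ContinuousOn u (Icc (q.re - δ) (q.re + δ) ×ℂ Icc (q.im - δ) (q.im + δ)))
    (hd : DifferentiableOn ℂ u (Ioo (q.re - δ) (q.re + δ) ×ℂ Ioo (q.im - δ) (q.im + δ)))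
    (h0 : ∀ w, w.re = q.re - δ → w.im ∈ Icc (q.im - δ) (q.im + δ) → u w = 0) : u q = 0 := by
  let v : ℂ → ℂ := fun w => u (q + w) * u (q + I * w) * u (q - w) * u (q - I * w)
  let T : Set ℂ := Ioo (-δ) δ ×ℂ Ioo (-δ) δ
  have hcl : closure T = Icc (-δ) δ ×ℂ Icc (-δ) δ := by
    rw [closure_reProdIm, closure_Ioo (by linarith)]
  have hfr : ∀ z ∈ frontier T, v z = 0 := by
    intro z hz
    have hop : IsOpen T := isOpen_Ioo.reProdIm isOpen_Ioo
    rw [hop.frontier_eq, hcl] at hz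
    obtain ⟨⟨⟨h1, h2⟩, h3, h4⟩, h5⟩ := hz
    simp only [v, mul_eq_zero]
    have : z.re = -δ ∨ z.im = δ ∨ z.re = δ ∨ z.im = -δ := by
      by_contra! hcon
      exact h5 ⟨⟨lt_of_le_of_ne h1 (Ne.symm hcon.1), lt_of_le_of_ne h2 hcon.2.2.1⟩,
        lt_of_le_of_ne h3 (Ne.symm hcon.2.2.2), lt_of_le_of_ne h4 hcon.2.1⟩
    rcases this with h | h | h | h
    · exact Or.inl (Or.inl (Or.inl (h0 _ (by simp [h, sub_eq_add_neg])
        (by simp; constructor <;> linarith))))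
    · exact Or.inl (Or.inl (Or.inr (h0 _ (by simp [h, sub_eq_add_neg])
        (by simp; constructor <;> linarith))))
    · exact Or.inl (Or.inr (h0 _ (by simp [h]) (by simp; constructor <;> linarith)))
    · exact Or.inr (h0 _ (by simp [h, sub_eq_add_neg]) (by simp; constructor <;> linarith))
  have hvd : DiffContOnCl ℂ v T := by
    constructor
    · refine (((hd.comp (by fun_prop) ?_).mul (hd.comp (by fun_prop) ?_)).mul
        (hd.comp (by fun_prop) ?_)).mul (hd.comp (by fun_prop) ?_) <;>
      · rintro z ⟨⟨h1, h2⟩, h3, h4⟩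
        simp [mem_reProdIm]
        refine ⟨⟨?_, ?_⟩, ?_, ?_⟩ <;> linarith
    · rw [hcl]
      refine (((hc.comp (by fun_prop) ?_).mul (hc.comp (by fun_prop) ?_)).mul
        (hc.comp (by fun_prop) ?_)).mul (hc.comp (by fun_prop) ?_) <;>
      · rintro z ⟨⟨h1, h2⟩, h3, h4⟩
        simp [mem_reProdIm]
        refine ⟨⟨?_, ?_⟩, ?_, ?_⟩ <;> linarith
  have hb : Bornology.IsBounded T :=
    (Metric.isBounded_Ioo _ _).reProdIm (Metric.isBounded_Ioo _ _)
  have := norm_le_of_forall_mem_frontier_norm_le hb hvd (C := 0)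
    (fun z hz => by simp [hfr z hz]) (z := 0) (subset_closure (by simp [T, mem_reProdIm, hδ]))
  have h4 : v 0 = 0 := norm_le_zero_iff.1 this
  simpa [v] using h4

/-- A holomorphic map on the exterior disc that omits `z₀` cannot tend to `z₀` at every point of an
open arc of the unit circle. The arc is described in the coordinate `w` with `z = exp w`. -/
lemma false_of_tendsto_arc {φ : ℂ → ℂ} {z₀ : ℂ}
    (hφd : DifferentiableOn ℂ φ {z : ℂ | 1 < ‖z‖})
    (hne : ∀ z, 1 < ‖z‖ → φ z ≠ z₀) {a b : ℝ} (hab : a < b)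
    (h : ∀ w₀ : ℂ, w₀.re = 0 → w₀.im ∈ Ioo a b →
      Tendsto (fun w => φ (exp w)) (𝓝[{w | 0 < w.re}] w₀) (𝓝 z₀)) : False := by
  -- The square with centre `q` and half-side `δ` has its left side on the imaginary axis, inside the
  -- arc; there `φ ∘ exp - z₀` extends continuously by zero.
  let δ := (b - a) / 4
  have hδ : 0 < δ := by simp only [δ]; linarith
  let q : ℂ := ⟨δ, (a + b) / 2⟩
  let u : ℂ → ℂ := fun w => if 0 < w.re then φ (exp w) - z₀ else 0
  have hopen : IsOpen {w : ℂ | 0 < w.re} := isOpen_lt continuous_const continuous_re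
  have hd0 : DifferentiableOn ℂ (fun w => φ (exp w) - z₀) {w : ℂ | 0 < w.re} :=
    (hφd.comp (by fun_prop) fun w hw => norm_exp_gt.2 hw).sub_const _
  have hd1 : DifferentiableOn ℂ u {w : ℂ | 0 < w.re} :=
    hd0.congr fun w hw => if_pos hw
  have hq := square_eq_zero (u := u) (q := q) hδ ?_ ?_ ?_
  · have : u q = φ (exp q) - z₀ := if_pos hδ
    rw [this, sub_eq_zero] at hq
    exact hne _ (norm_exp_gt.2 hδ) hq
  · rintro w ⟨⟨h1, -⟩, h3, h4⟩
    simp only [q, δ] at h1 h3 h4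
    rcases lt_or_eq_of_le (show 0 ≤ w.re by linarith) with hw | hw
    · exact ((hd1.continuousOn).continuousAt (hopen.mem_nhds hw)).continuousWithinAt
    · have hu : u w = 0 := if_neg (by simp [← hw])
      have hcw : Tendsto u (𝓝 w) (𝓝 0) := by
        refine Tendsto.if ?_ tendsto_const_nhds
        have := (h w hw.symm ⟨by linarith, by linarith⟩).sub_const z₀
        rw [sub_self] at this
        exact this
      have : ContinuousAt u w := by rw [ContinuousAt, hu]; exact hcw
      exact this.continuousWithinAt
  · refine hd1.mono ?_
    rintro w ⟨⟨h1, -⟩, -⟩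
    simpa [q] using h1
  · intro w hw _
    exact if_neg (by simp [hw, q])

/-! ### The rays as arcs -/

/-- An arc `γ` from `z₀` (at parameter `1`) to `∞`, avoiding `p`, is an `arcSet`: reparametrize by
`s = r⁻¹`, so that `s = 0` corresponds to `∞` and `s = 1` to `z₀`. -/
lemma exists_arc_param {γ : ℝ → ℂ} {z₀ p : ℂ} (hc : ContinuousOn γ (Ioi 1))
    (h1 : Tendsto γ (𝓝[>] 1) (𝓝 z₀)) (hinf : Tendsto γ atTop (Bornology.cobounded ℂ))
    (hp : ∀ r, 1 < r → γ r ≠ p) (hp0 : z₀ ≠ p) :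
    ∃ κ : ℝ → ℂ, ContinuousOn κ (Icc 0 1) ∧ κ 0 = 0 ∧ κ 1 = (p - z₀)⁻¹ ∧
      arcSet κ p = insert z₀ (γ '' Ioi 1) := by
  let κ : ℝ → ℂ := fun s => if s ≤ 0 then 0 else if 1 ≤ s then (p - z₀)⁻¹ else (p - γ s⁻¹)⁻¹
  have hmid : ∀ s, 0 < s → s < 1 → κ s = (p - γ s⁻¹)⁻¹ := fun s h0 h1 => by
    simp only [κ, if_neg (not_le.2 h0), if_neg (not_le.2 h1)]
  have hκ0 : κ 0 = 0 := by simp [κ]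
  have hκ1 : κ 1 = (p - z₀)⁻¹ := by simp [κ]
  have hne : p - z₀ ≠ 0 := sub_ne_zero.2 hp0.symm
  have hroot : ∀ z c : ℂ, p - c ≠ 0 → (1 + (z - p) * (p - c)⁻¹ = 0 ↔ z = c) := fun z c h => by
    field_simp
    constructor <;> intro h <;> linear_combination h
  refine ⟨κ, ?_, hκ0, hκ1, ?_⟩
  · rintro s ⟨hs0, hs1⟩
    refine ContinuousAt.continuousWithinAt ?_
    rcases hs0.eq_or_lt with rfl | hs0
    · rw [ContinuousAt, hκ0]
      refine Tendsto.if tendsto_const_nhds ?_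
      have hev : ∀ᶠ x : ℝ in 𝓝[{x | ¬ x ≤ 0}] 0, x < 1 :=
        nhdsWithin_le_nhds (gt_mem_nhds one_pos)
      have hlim : Tendsto (fun x : ℝ => (p - γ x⁻¹)⁻¹) (𝓝[{x | ¬ x ≤ 0}] 0) (𝓝 0) := by
        have : {x : ℝ | ¬ x ≤ 0} = Ioi 0 := by ext; simp
        rw [this]
        refine tendsto_inv₀_cobounded.comp ?_
        exact (tendsto_const_sub_cobounded p).comp (hinf.comp tendsto_inv_nhdsGT_zero)
      refine hlim.congr' ?_
      filter_upwards [hev] with x hx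
      rw [if_neg (not_le.2 hx)]
    · have hev : ∀ᶠ x : ℝ in 𝓝 s, 0 < x := lt_mem_nhds hs0
      rcases hs1.eq_or_lt with rfl | hs1
      · have : ContinuousAt (fun s : ℝ => if 1 ≤ s then (p - z₀)⁻¹ else (p - γ s⁻¹)⁻¹) 1 := by
          rw [ContinuousAt, if_pos le_rfl]
          refine Tendsto.if tendsto_const_nhds ?_
          refine Tendsto.inv₀ (tendsto_const_nhds.sub (h1.comp ?_)) hne
          refine tendsto_nhdsWithin_iff.2 ⟨?_, ?_⟩
          · have : Tendsto (fun x : ℝ => x⁻¹) (𝓝 1) (𝓝 1⁻¹) := tendsto_inv₀ one_ne_zero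
            rw [inv_one] at this
            exact this.mono_left nhdsWithin_le_nhds
          · filter_upwards [self_mem_nhdsWithin, nhdsWithin_le_nhds hev] with x hx hx0
            exact (one_lt_inv₀ hx0).2 (not_le.1 hx)
        refine this.congr ?_
        filter_upwards [hev] with x hx
        simp only [κ, if_neg (not_le.2 hx)]
      · have h1s : 1 < s⁻¹ := (one_lt_inv₀ hs0).2 hs1
        have : ContinuousAt (fun s : ℝ => (p - γ s⁻¹)⁻¹) s := by
          refine ContinuousAt.inv₀ (continuousAt_const.sub ?_) (sub_ne_zero.2 (hp _ h1s).symm)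
          exact ContinuousAt.comp (f := fun s : ℝ => s⁻¹) (hc.continuousAt (Ioi_mem_nhds h1s))
            (continuousAt_inv₀ hs0.ne')
        refine this.congr ?_
        filter_upwards [hev, gt_mem_nhds hs1] with x hx hx1
        exact (hmid x hx hx1).symm
  · ext z
    constructor
    · rintro ⟨s, ⟨hs0, hs1⟩, hs⟩
      rcases hs0.eq_or_lt with rfl | hs0
      · simp [hκ0] at hs
      rcases hs1.eq_or_lt with rfl | hs1
      · rw [hκ1, hroot _ _ hne] at hs
        exact Or.inl hs
      · have h1s : 1 < s⁻¹ := (one_lt_inv₀ hs0).2 hs1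
        rw [hmid s hs0 hs1, hroot _ _ (sub_ne_zero.2 (hp _ h1s).symm)] at hs
        exact Or.inr ⟨s⁻¹, h1s, hs.symm⟩
    · rintro (rfl | ⟨r, hr, rfl⟩)
      · exact ⟨1, by simp, by rw [hκ1, hroot _ _ hne]⟩
      · have hr1 : (1 : ℝ) < r := hr
        have hr0 : 0 < r := by linarith
        refine ⟨r⁻¹, ⟨by positivity, (inv_lt_one_of_one_lt₀ hr1).le⟩, ?_⟩
        rw [hmid _ (by positivity) (inv_lt_one_of_one_lt₀ hr1), inv_inv,
          hroot _ _ (sub_ne_zero.2 (hp _ hr1).symm)]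

/-! ### Boundary behaviour of the conformal map -/

/-- Open mapping theorem for the injective map `φ`. -/
lemma image_mem_nhds_of_injOn {φ : ℂ → ℂ} (hφd : DifferentiableOn ℂ φ {z : ℂ | 1 < ‖z‖})
    (hφi : Set.InjOn φ {z : ℂ | 1 < ‖z‖}) {z : ℂ} (hz : 1 < ‖z‖) {V : Set ℂ} (hV : V ∈ 𝓝 z) :
    φ '' V ∈ 𝓝 (φ z) := by
  have hD : {z : ℂ | 1 < ‖z‖} ∈ 𝓝 z := (isOpen_lt continuous_const continuous_norm).mem_nhds hz
  rcases (hφd.analyticAt hD).eventually_constant_or_nhds_le_map_nhds with h | h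
  · exfalso
    have h2 : ∀ᶠ w in 𝓝[≠] z, False := by
      filter_upwards [nhdsWithin_le_nhds h, nhdsWithin_le_nhds hD, self_mem_nhdsWithin]
        with w hw hwD hne
      exact hne (hφi hwD hz hw)
    simpa using h2.exists
  · exact h (image_mem_map hV)

lemma isPreconnected_norm_gt {M : ℝ} (hM : 0 < M) : IsPreconnected {z : ℂ | M < ‖z‖} := by
  have : {z : ℂ | M < ‖z‖} = exp '' {w | Real.log M < w.re} := by
    ext z
    constructor
    · intro hz
      have hz : M < ‖z‖ := hz
      have h0 : z ≠ 0 := norm_pos_iff.1 (hM.trans hz)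
      exact ⟨log z, by simpa only [mem_ofPred_eq, log_re] using Real.log_lt_log hM hz, exp_log h0⟩
    · rintro ⟨w, hw, rfl⟩
      simpa [norm_exp] using (Real.log_lt_iff_lt_exp hM).1 hw
  rw [this]
  exact ((convex_halfSpace_re_gt _).isPreconnected).image _ (by fun_prop)

/-- By connectedness of a neighbourhood of `∞`, it is covered by the image of `{2 < ‖z‖}` alone, so by
injectivity the annulus `{1 < ‖z‖ < 2}` has bounded image. -/
lemma exists_bound_annulus {K : Set ℂ} (hK : IsCompact K) {φ : ℂ → ℂ}
    (hφd : DifferentiableOn ℂ φ {z : ℂ | 1 < ‖z‖}) (hφi : Set.InjOn φ {z : ℂ | 1 < ‖z‖})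
    (hφr : φ '' {z : ℂ | 1 < ‖z‖} = Kᶜ)
    (hφinf : Tendsto φ (Bornology.cobounded ℂ) (Bornology.cobounded ℂ)) :
    ∃ M, ∀ z, 1 < ‖z‖ → ‖z‖ < 2 → ‖φ z‖ ≤ M := by
  have hS : IsCompact (φ '' Metric.sphere 0 2) := by
    refine (isCompact_sphere _ _).image_of_continuousOn (hφd.continuousOn.mono fun z hz => ?_)
    have : ‖z‖ = 2 := by simpa using hz
    simp [this]
  obtain ⟨M₀, hM₀⟩ := (hK.union hS).isBounded.exists_norm_le
  let M := max M₀ 1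
  refine ⟨M, fun z hz1 hz2 => ?_⟩
  by_contra! hcon
  have hopen : ∀ V ⊆ {z : ℂ | 1 < ‖z‖}, IsOpen V → IsOpen (φ '' V) := by
    intro V hVD hV
    rw [isOpen_iff_mem_nhds]
    rintro _ ⟨z, hz, rfl⟩
    exact image_mem_nhds_of_injOn hφd hφi (hVD hz) (hV.mem_nhds hz)
  let V₁ : Set ℂ := {z | 1 < ‖z‖ ∧ ‖z‖ < 2}
  let V₂ : Set ℂ := {z | 2 < ‖z‖}
  have hV₁ : V₁ ⊆ {z : ℂ | 1 < ‖z‖} := fun z hz => hz.1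
  have hV₂ : V₂ ⊆ {z : ℂ | 1 < ‖z‖} := fun z hz => by
    have : 2 < ‖z‖ := hz
    show 1 < ‖z‖
    linarith
  have hex : ({z : ℂ | M < ‖z‖} ∩ φ '' V₂).Nonempty := by
    have e1 : ∀ᶠ z in Bornology.cobounded ℂ, M < ‖φ z‖ :=
      (tendsto_norm_cobounded_atTop.comp hφinf).eventually_gt_atTop M
    have e2 : ∀ᶠ z : ℂ in Bornology.cobounded ℂ, 2 < ‖z‖ :=
      tendsto_norm_cobounded_atTop.eventually_gt_atTop 2
    obtain ⟨w, hw1, hw2⟩ := (e1.and e2).exists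
    exact ⟨φ w, hw1, w, hw2, rfl⟩
  have hcov : {z : ℂ | M < ‖z‖} ⊆ φ '' V₁ ∪ φ '' V₂ := by
    intro x hx
    have hxM : M₀ < ‖x‖ := lt_of_le_of_lt (le_max_left _ _) hx
    have hxK : x ∈ Kᶜ := fun h => absurd (hM₀ x (Or.inl h)) (not_le.2 hxM)
    rw [← hφr] at hxK
    obtain ⟨w, hw, rfl⟩ := hxK
    rcases lt_trichotomy ‖w‖ 2 with h | h | h
    · exact Or.inl ⟨w, ⟨hw, h⟩, rfl⟩
    · exact absurd (hM₀ _ (Or.inr ⟨w, by simpa using h, rfl⟩)) (not_le.2 hxM)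
    · exact Or.inr ⟨w, h, rfl⟩
  obtain ⟨x, -, ⟨w₁, hw₁, h₁⟩, w₂, hw₂, h₂⟩ :=
    isPreconnected_norm_gt (lt_of_lt_of_le one_pos (le_max_right M₀ 1)) (φ '' V₁) (φ '' V₂)
      (hopen _ hV₁ ((isOpen_lt continuous_const continuous_norm).inter
        (isOpen_lt continuous_norm continuous_const)))
      (hopen _ hV₂ (isOpen_lt continuous_const continuous_norm)) hcov
      ⟨φ z, hcon, z, ⟨hz1, hz2⟩, rfl⟩ hex
  have := hφi (hV₁ hw₁) (hV₂ hw₂) (h₁.trans h₂.symm)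
  subst this
  exact lt_asymm hw₁.2 hw₂

/-- The half-strip of those `w` for which `exp w` lies outside the closed unit disc and has an argument
in `(a, b)`. -/
def sector (a b : ℝ) : Set ℂ := {w | 0 < w.re ∧ w.im ∈ Ioo a b}

lemma isPreconnected_sector (a b : ℝ) : IsPreconnected (sector a b) :=
  (Convex.inter (convex_halfSpace_re_gt 0)
    ((convex_halfSpace_im_gt a).inter (convex_halfSpace_im_lt b))).isPreconnected

/-- If a continuous `d` is constant on `K \ {z₀}` and takes a different constant value on the image of
a sector, then that image can accumulate on `K` only at `z₀`, which is impossible. -/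
lemma false_of_separated {K : Set ℂ} (hK : IsCompact K) {φ : ℂ → ℂ}
    (hφd : DifferentiableOn ℂ φ {z : ℂ | 1 < ‖z‖}) (hφi : Set.InjOn φ {z : ℂ | 1 < ‖z‖})
    (hφr : φ '' {z : ℂ | 1 < ‖z‖} = Kᶜ)
    (hφinf : Tendsto φ (Bornology.cobounded ℂ) (Bornology.cobounded ℂ))
    {z₀ : ℂ} (hz₀ : z₀ ∈ K) {a b : ℝ} (hab : a < b) {W : Set ℂ} (hW : IsOpen W)
    (hKW : K \ {z₀} ⊆ W) {d : ℂ → ℂ} (hd : ContinuousOn d W) {c c₁ : ℂ} (hne : c ≠ c₁)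
    (hdK : ∀ z ∈ K \ {z₀}, d z = c) (hdU : ∀ w ∈ sector a b, d (φ (exp w)) = c₁) : False := by
  have hout : ∀ z, 1 < ‖z‖ → φ z ∉ K := fun z hz => by
    have : φ z ∈ Kᶜ := hφr ▸ mem_image_of_mem φ hz
    exact this
  obtain ⟨M, hM⟩ := exists_bound_annulus hK hφd hφi hφr hφinf
  refine false_of_tendsto_arc hφd (fun z hz h => hout z hz (h ▸ hz₀)) hab fun w₀ hw₀ hw₀' => ?_
  have hnorm : Tendsto (fun w : ℂ => ‖exp w‖) (𝓝[{w | 0 < w.re}] w₀) (𝓝 1) := by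
    have : Continuous fun w : ℂ => ‖exp w‖ := by fun_prop
    have h := this.tendsto w₀
    rw [norm_exp, hw₀, Real.exp_zero] at h
    exact h.mono_left nhdsWithin_le_nhds
  have hre : ∀ᶠ w : ℂ in 𝓝[{w | 0 < w.re}] w₀, 1 < ‖exp w‖ := by
    filter_upwards [self_mem_nhdsWithin] with w hw using norm_exp_gt.2 hw
  have hsec : ∀ᶠ w : ℂ in 𝓝[{w | 0 < w.re}] w₀, w ∈ sector a b := by
    filter_upwards [self_mem_nhdsWithin, nhdsWithin_le_nhds
      (continuous_im.continuousAt.preimage_mem_nhds (isOpen_Ioo.mem_nhds hw₀'))] with w h1 h2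
    exact ⟨h1, h2⟩
  rw [tendsto_iff_ultrafilter]
  intro g hg
  have hmem : Metric.closedBall (0 : ℂ) M ∈ g.map (fun w => φ (exp w)) := by
    rw [Ultrafilter.mem_map]
    filter_upwards [hg hre, hg (hnorm.eventually_lt_const one_lt_two)] with w h1 h2
    simpa using hM _ h1 h2
  obtain ⟨ζ, -, hζ⟩ := (isCompact_closedBall (0 : ℂ) M).ultrafilter_le_nhds' _ hmem
  have hζ' : Tendsto (fun w => φ (exp w)) g (𝓝 ζ) := hζ
  have hζK : ζ ∈ K := by
    -- A limit `ζ = φ z₁` off `K` would force `exp w` to stay near `z₁`, away from the unit circle.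
    by_contra hcon
    have : ζ ∈ Kᶜ := hcon
    rw [← hφr] at this
    obtain ⟨z₁, hz₁, rfl⟩ := this
    obtain ⟨t, ht1, ht2⟩ := exists_between (show 1 < ‖z₁‖ from hz₁)
    have hev := hζ'.eventually_mem (image_mem_nhds_of_injOn hφd hφi hz₁
      ((isOpen_lt continuous_const continuous_norm).mem_nhds ht2))
    obtain ⟨w, ⟨v, hv, hvw⟩, hw1, hw2⟩ :=
      (Eventually.and hev ((Eventually.filter_mono hg hre).and
        (Eventually.filter_mono hg (hnorm.eventually_lt_const ht1)))).exists
    have hv : t < ‖v‖ := hv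
    have hvw := hφi (show 1 < ‖v‖ by linarith) hw1 hvw
    have hw2 : ‖exp w‖ < t := hw2
    rw [← hvw] at hw2
    linarith
  by_cases hζ0 : ζ = z₀
  · rwa [hζ0] at hζ'
  · exfalso
    have h1 : Tendsto (fun w => d (φ (exp w))) g (𝓝 (d ζ)) :=
      (hd.continuousAt (hW.mem_nhds (hKW ⟨hζK, hζ0⟩))).tendsto.comp hζ'
    have h2 : Tendsto (fun w => d (φ (exp w))) g (𝓝 c₁) := by
      refine tendsto_const_nhds.congr' ?_
      filter_upwards [hg hsec] with w hw using (hdU w hw).symm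
    exact hne ((hdK ζ ⟨hζK, hζ0⟩).symm.trans (tendsto_nhds_unique h1 h2))

/-! ### Separation of the plane by the two rays -/

/-- The external ray at angle `c`, without its landing point. -/
def extRay (φ : ℂ → ℂ) (c : ℝ) : Set ℂ := (fun r : ℝ => φ (r * exp (c * I))) '' Ioi 1

lemma mem_extRay {φ : ℂ → ℂ} {c : ℝ} {w : ℂ} (hw : 0 < w.re) (hc : w.im = c) :
    φ (exp w) ∈ extRay φ c := by
  refine ⟨Real.exp w.re, Real.one_lt_exp_iff.2 hw, ?_⟩
  simp only
  rw [ofReal_exp, ← exp_add, ← hc, re_add_im]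

lemma exists_int_of_mem_extRay {φ : ℂ → ℂ} (hφi : Set.InjOn φ {z : ℂ | 1 < ‖z‖}) {c : ℝ} {w : ℂ}
    (hw : 0 < w.re) (h : φ (exp w) ∈ extRay φ c) : ∃ n : ℤ, w.im = c + n * (2 * Real.pi) := by
  obtain ⟨r, hr, h⟩ := h
  have hr : 1 < r := hr
  have h0 : 0 < r := by linarith
  have hn : 1 < ‖(r : ℂ) * exp (c * I)‖ := by
    rw [norm_mul, norm_exp_ofReal_mul_I, mul_one, norm_real, Real.norm_of_nonneg h0.le]
    exact hr
  have h := hφi hn (norm_exp_gt.2 hw) h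
  rw [← exp_log (ofReal_ne_zero.2 h0.ne'), ← exp_add] at h
  obtain ⟨n, hn⟩ := exp_eq_exp_iff_exists_int.1 h.symm
  refine ⟨n, ?_⟩
  have := congrArg im hn
  rw [← ofReal_log h0.le] at this
  simpa using this

/-- A point on neither ray comes from one of the two sectors between them. -/
lemma exists_sector {φ : ℂ → ℂ} {z : ℂ} (hz : 1 < ‖z‖) {a b : ℝ}
    (ha : φ z ∉ extRay φ a) (hb : φ z ∉ extRay φ b) :
    ∃ w, φ (exp w) = φ z ∧ (w ∈ sector a b ∨ w ∈ sector b (a + 2 * Real.pi)) := by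
  have h0 : z ≠ 0 := norm_pos_iff.1 (one_pos.trans hz)
  have hpi := Real.two_pi_pos
  let n : ℤ := ⌊((log z).im - a) / (2 * Real.pi)⌋
  let w : ℂ := log z - n * (2 * Real.pi * I)
  have hw : exp w = z := by
    rw [exp_sub, exp_int_mul_two_pi_mul_I, div_one, exp_log h0]
  have hre : 0 < w.re := norm_exp_gt.1 (hw ▸ hz)
  have him : w.im = (log z).im - n * (2 * Real.pi) := by simp [w]
  have h1 : a ≤ w.im := by
    have := (le_div_iff₀ hpi).1 (Int.floor_le (((log z).im - a) / (2 * Real.pi)))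
    rw [him]; linarith
  have h2 : w.im < a + 2 * Real.pi := by
    have := (div_lt_iff₀ hpi).1 (Int.lt_floor_add_one (((log z).im - a) / (2 * Real.pi)))
    rw [him]; linarith
  have h1' : a ≠ w.im := fun h => ha (hw ▸ mem_extRay hre h.symm)
  have h3 : w.im ≠ b := fun h => hb (hw ▸ mem_extRay hre h)
  refine ⟨w, by rw [hw], ?_⟩
  rcases lt_or_gt_of_ne h3 with h | h
  · exact Or.inl ⟨hre, lt_of_le_of_ne h1 h1', h⟩
  · exact Or.inr ⟨hre, h, h2⟩

/-- The statement with the two angles normalized by `a < b < a + 2π`. -/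
lemma not_isPreconnected_of_lt {K : Set ℂ} (hK : IsCompact K) (hnt : K.Nontrivial) {φ : ℂ → ℂ}
    (hφd : DifferentiableOn ℂ φ {z : ℂ | 1 < ‖z‖}) (hφi : Set.InjOn φ {z : ℂ | 1 < ‖z‖})
    (hφr : φ '' {z : ℂ | 1 < ‖z‖} = Kᶜ)
    (hφinf : Tendsto φ (Bornology.cobounded ℂ) (Bornology.cobounded ℂ))
    {a b : ℝ} (hab : a < b) (hba : b < a + 2 * Real.pi) {z₀ : ℂ} (hz₀ : z₀ ∈ K)
    (ha : Tendsto (fun r : ℝ => φ ((r : ℂ) * exp (a * I))) (𝓝[>] (1 : ℝ)) (𝓝 z₀))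
    (hb : Tendsto (fun r : ℝ => φ ((r : ℂ) * exp (b * I))) (𝓝[>] (1 : ℝ)) (𝓝 z₀)) :
    ¬ IsPreconnected (K \ {z₀}) := by
  classical
  intro hpre
  have hpi := Real.two_pi_pos
  obtain ⟨p, hpK, hp0⟩ := hnt.exists_ne z₀
  have hout : ∀ z, 1 < ‖z‖ → φ z ∉ K := fun z hz => by
    have : φ z ∈ Kᶜ := hφr ▸ mem_image_of_mem φ hz
    exact this
  have hnorm : ∀ (c r : ℝ), 1 < r → 1 < ‖(r : ℂ) * exp (c * I)‖ := fun c r hr => by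
    rw [norm_mul, norm_exp_ofReal_mul_I, mul_one, norm_real, Real.norm_of_nonneg (by linarith)]
    exact hr
  have hrayK : ∀ c, ∀ z ∈ extRay φ c, z ∉ K := by
    rintro c _ ⟨r, hr, rfl⟩
    exact hout _ (hnorm c r hr)
  have hm : (p - z₀)⁻¹ ≠ 0 := inv_ne_zero (sub_ne_zero.2 hp0)
  have key : ∀ c : ℝ, Tendsto (fun r : ℝ => φ ((r : ℂ) * exp (c * I))) (𝓝[>] (1 : ℝ)) (𝓝 z₀) →
      IsClosed (insert z₀ (extRay φ c)) ∧ ∃ L : ℂ → ℂ,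
        ContinuousOn L (insert z₀ (extRay φ c))ᶜ ∧
        ∀ z ∈ (insert z₀ (extRay φ c))ᶜ, exp (L z) = (z - z₀) * (p - z₀)⁻¹ := by
    intro c hc
    obtain ⟨κ, hκ, h0, h1, hset⟩ := exists_arc_param
      (γ := fun r : ℝ => φ ((r : ℂ) * exp (c * I))) (p := p)
      (hφd.continuousOn.comp (by fun_prop) fun r hr => hnorm c r hr) hc
      (hφinf.comp (by
        rw [← tendsto_norm_atTop_iff_cobounded]
        refine tendsto_id.congr' ?_
        filter_upwards [eventually_ge_atTop 0] with r hr
        rw [norm_mul, norm_exp_ofReal_mul_I, mul_one, norm_real, Real.norm_of_nonneg hr, id]))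
      (fun r hr h => hout _ (hnorm c r hr) (h ▸ hpK)) hp0.symm
    obtain ⟨L, hL, hexp⟩ := exists_log_off_arcSet hκ h0 p
    have hcl := isClosed_arcSet hκ p
    rw [hset] at hL hexp hcl
    refine ⟨hcl, L, hL, fun z hz => ?_⟩
    rw [hexp z hz, h1]
    have := sub_ne_zero.2 hp0
    field_simp
    ring
  obtain ⟨hcla, La, hLa, hea⟩ := key a ha
  obtain ⟨hclb, Lb, hLb, heb⟩ := key b hb
  let W : Set ℂ := (insert z₀ (extRay φ a))ᶜ ∩ (insert z₀ (extRay φ b))ᶜ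
  have hW : IsOpen W := hcla.isOpen_compl.inter hclb.isOpen_compl
  let d : ℂ → ℂ := fun z => La z - Lb z
  have hd : ContinuousOn d W := (hLa.mono inter_subset_left).sub (hLb.mono inter_subset_right)
  have hd1 : ∀ z ∈ W, exp (d z) = 1 := fun z hz => by
    rw [exp_sub, hea z hz.1, ← heb z hz.2, div_self (exp_ne_zero _)]
  have hKW : K \ {z₀} ⊆ W := fun z hz =>
    ⟨by rintro (h | h); exacts [hz.2 h, hrayK _ _ h hz.1],
      by rintro (h | h); exacts [hz.2 h, hrayK _ _ h hz.1]⟩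
  have hray : ∀ (c : ℝ) (w : ℂ), 0 < w.re → (∀ n : ℤ, w.im ≠ c + n * (2 * Real.pi)) →
      φ (exp w) ∈ (insert z₀ (extRay φ c))ᶜ := by
    rintro c w hw hn (h | h)
    · exact hout _ (norm_exp_gt.2 hw) (h ▸ hz₀)
    · obtain ⟨n, h⟩ := exists_int_of_mem_extRay hφi hw h
      exact hn n h
  -- `x` lies strictly between two consecutive elements of `c + 2πℤ`.
  have hgap : ∀ (x c : ℝ) (m : ℤ), c + m * (2 * Real.pi) < x → x < c + (m + 1) * (2 * Real.pi) →
      ∀ n : ℤ, x ≠ c + n * (2 * Real.pi) := by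
    rintro x c m h1 h2 n rfl
    have h1 : (m : ℝ) < n := lt_of_mul_lt_mul_right (by linarith) hpi.le
    have h2 : (n : ℝ) < m + 1 := lt_of_mul_lt_mul_right (by linarith) hpi.le
    norm_cast at h1 h2
    omega
  have hs₁ : ∀ w ∈ sector a b, φ (exp w) ∈ W := by
    rintro w ⟨hw, h1, h2⟩
    exact ⟨hray a w hw (hgap _ _ 0 (by push_cast; linarith) (by push_cast; linarith)),
      hray b w hw (hgap _ _ (-1) (by push_cast; linarith) (by push_cast; linarith))⟩
  have hs₂ : ∀ w ∈ sector b (a + 2 * Real.pi), φ (exp w) ∈ W := by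
    rintro w ⟨hw, h1, h2⟩
    exact ⟨hray a w hw (hgap _ _ 0 (by push_cast; linarith) (by push_cast; linarith)),
      hray b w hw (hgap _ _ 0 (by push_cast; linarith) (by push_cast; linarith))⟩
  have hconst : ∀ x y : ℝ, x < y → (∀ w ∈ sector x y, φ (exp w) ∈ W) →
      ∃ c, exp c = 1 ∧ ∀ w ∈ sector x y, d (φ (exp w)) = c := by
    intro x y hxy hs
    let w₁ : ℂ := ⟨1, (x + y) / 2⟩
    have hw₁ : w₁ ∈ sector x y := ⟨one_pos, by simp only [w₁]; constructor <;> linarith⟩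
    have hcont : ContinuousOn (fun w => d (φ (exp w))) (sector x y) :=
      hd.comp (hφd.continuousOn.comp (by fun_prop) fun w hw => norm_exp_gt.2 hw.1) hs
    exact ⟨d (φ (exp w₁)), hd1 _ (hs _ hw₁), fun w hw =>
      eq_of_exp_eq_one (isPreconnected_sector x y) hcont (fun w hw => hd1 _ (hs w hw)) hw hw₁⟩
  obtain ⟨c₁, hc₁, hU₁⟩ := hconst a b hab hs₁
  obtain ⟨c₂, hc₂, hU₂⟩ := hconst b (a + 2 * Real.pi) hba hs₂
  have hdK : ∀ z ∈ K \ {z₀}, d z = d p := fun z hz =>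
    eq_of_exp_eq_one hpre (hd.mono hKW) (fun z hz => hd1 z (hKW hz)) hz ⟨hpK, hp0⟩
  have e₁ : d p = c₁ := by
    by_contra hne
    exact false_of_separated hK hφd hφi hφr hφinf hz₀ hab hW hKW hd hne hdK hU₁
  have e₂ : d p = c₂ := by
    by_contra hne
    exact false_of_separated hK hφd hφi hφr hφinf hz₀ hba hW hKW hd hne hdK hU₂
  have e₁₂ : c₂ = c₁ := e₂.symm.trans e₁
  subst e₁₂
  have haL : ∀ z ∈ extRay φ a, z ∈ (insert z₀ (extRay φ b))ᶜ := by
    rintro _ ⟨r, hr, rfl⟩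
    have hr : 1 < r := hr
    have h := hray b ⟨Real.log r, a⟩ (Real.log_pos hr)
      (hgap a _ (-1) (by push_cast; linarith) (by push_cast; linarith))
    convert! h using 2
    have : (⟨Real.log r, a⟩ : ℂ) = Real.log r + a * I := by apply Complex.ext <;> simp
    rw [this, exp_add, ← ofReal_exp, Real.exp_log (by linarith)]
  -- If both sectors carry the same value of `d`, the branches `La` and `Lb + c₂` agree near the open
  -- ray at angle `a` and so glue to a logarithm on the punctured plane.
  let L : ℂ → ℂ := fun z => if z ∈ extRay φ a then Lb z + c₂ else La z
  have hLN : ∀ z ∈ Kᶜ ∩ (insert z₀ (extRay φ b))ᶜ, L z = Lb z + c₂ := by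
    rintro z ⟨hzK, hzb⟩
    by_cases hza : z ∈ extRay φ a
    · exact if_pos hza
    · rw [← hφr] at hzK
      obtain ⟨v, hv, rfl⟩ := hzK
      obtain ⟨w, hw, hws⟩ := exists_sector hv hza fun h => hzb (Or.inr h)
      have : d (φ v) = c₂ := by
        rw [← hw]
        exact hws.elim (hU₁ w) (hU₂ w)
      have hL : L (φ v) = La (φ v) := if_neg hza
      rw [hL, ← this]
      simp [d]
  refine no_log_punctured (z₀ := z₀) hm (L := L) (fun z hz => ?_) fun z hz => ?_
  · refine ContinuousAt.continuousWithinAt ?_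
    by_cases hza : z ∈ extRay φ a
    · have hN : Kᶜ ∩ (insert z₀ (extRay φ b))ᶜ ∈ 𝓝 z :=
        (hK.isClosed.isOpen_compl.inter hclb.isOpen_compl).mem_nhds ⟨hrayK _ _ hza, haL z hza⟩
      have : ContinuousAt (fun z => Lb z + c₂) z :=
        (hLb.continuousAt (hclb.isOpen_compl.mem_nhds (haL z hza))).add continuousAt_const
      refine this.congr ?_
      filter_upwards [hN] with x hx using (hLN x hx).symm
    · have hN : (insert z₀ (extRay φ a))ᶜ ∈ 𝓝 z :=
        hcla.isOpen_compl.mem_nhds (by rintro (h | h); exacts [hz h, hza h])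
      refine (hLa.continuousAt hN).congr ?_
      filter_upwards [hN] with x hx
      exact (if_neg fun h => hx (Or.inr h)).symm
  · by_cases hza : z ∈ extRay φ a
    · have : L z = Lb z + c₂ := if_pos hza
      rw [this, exp_add, hc₂, mul_one, heb z (haL z hza)]
    · have : L z = La z := if_neg hza
      rw [this, hea z (by rintro (h | h); exacts [hz h, hza h])]

/-- If two distinct external rays of a compact connected set `K ⊆ ℂ` with more than one
point land at the same point `z₀ ∈ ∂K`, then `K \ {z₀}` is disconnected.  Here the
external rays are given by a conformal map `φ` from `{|z| > 1}` onto `ℂ \ K`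
with `φ(∞) = ∞`. -/
theorem stmt_10 (K : Set ℂ) (hK : IsCompact K) (hKc : IsConnected K) (hnt : K.Nontrivial)
    (φ : ℂ → ℂ)
    (hφd : DifferentiableOn ℂ φ {z : ℂ | 1 < ‖z‖})
    (hφi : Set.InjOn φ {z : ℂ | 1 < ‖z‖})
    (hφr : φ '' {z : ℂ | 1 < ‖z‖} = Kᶜ)
    (hφinf : Tendsto φ (Bornology.cobounded ℂ) (Bornology.cobounded ℂ))
    (a b : ℝ) (hab : Complex.exp (a * Complex.I) ≠ Complex.exp (b * Complex.I))
    (z₀ : ℂ) (hz₀ : z₀ ∈ frontier K)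
    (ha : Tendsto (fun r : ℝ => φ ((r : ℂ) * Complex.exp (a * Complex.I)))
      (𝓝[>] (1 : ℝ)) (𝓝 z₀))
    (hb : Tendsto (fun r : ℝ => φ ((r : ℂ) * Complex.exp (b * Complex.I)))
      (𝓝[>] (1 : ℝ)) (𝓝 z₀)) :
    ¬ IsPreconnected (K \ {z₀}) := by
  have hpi := Real.two_pi_pos
  have hz₀K : z₀ ∈ K := hK.isClosed.frontier_subset hz₀
  -- Shift `b` by a multiple of `2π` into `[a, a + 2π)`.
  let n : ℤ := ⌊(b - a) / (2 * Real.pi)⌋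
  let b' : ℝ := b - n * (2 * Real.pi)
  have hb' : exp (b' * I) = exp (b * I) := by
    have : (b' : ℂ) * I = b * I - n * (2 * Real.pi * I) := by
      simp only [b']
      push_cast
      ring
    rw [this, exp_sub, exp_int_mul_two_pi_mul_I, div_one]
  have h1 : a ≤ b' := by
    have := (le_div_iff₀ hpi).1 (Int.floor_le ((b - a) / (2 * Real.pi)))
    simp only [b', n]
    linarith
  have h2 : b' < a + 2 * Real.pi := by
    have := (div_lt_iff₀ hpi).1 (Int.lt_floor_add_one ((b - a) / (2 * Real.pi)))
    simp only [b', n]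
    linarith
  have h3 : a ≠ b' := fun h => hab (by rw [← hb', ← h])
  rw [← hb'] at hb
  exact not_isPreconnected_of_lt hK hnt hφd hφi hφr hφinf (lt_of_le_of_ne h1 h3) h2 hz₀K ha hb
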